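/- Let P be a centrally symmetric convex dodecagon (a convex polygon with exactly 12 vertices, symmetric about a point) and let P + X be a k-fold translative tiling of the plane. Suppose a vertex v ∈ V + X lies in the relative interior of an edge G of some translate P + x_j, and let v′ and v* denote the two endpoints of G. Then there exist four pairwise distinct points y′₁, y′₂, y*₁, y*₂ of X such that v′ ∈ ∂(P) + y′_i and v ∈ int(P) + y′_i for i = 1, 2, and v* ∈ ∂(P) + y*_i and v ∈ int(P) + y*_i for i = 1, 2; in particular, at least 4 translates of int(P) contain v. -/

import Mathlib

open Pointwise

/-- `K + X` is a `k`-fold translative tiling of the plane: the translate multiset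
`(x i)` is discrete, every point of the plane belongs to at least `k` of the translates
`K + x i`, and every point belongs to at most `k` of the translates `interior K + x i`
(multiplicity counted over the index set). -/
def IsKFoldTranslativeTiling {ι : Type} (K : Set (ℝ × ℝ)) (x : ι → ℝ × ℝ) (k : ℕ) : Prop :=
  (∀ R : ℝ, {i : ι | ‖x i‖ ≤ R}.Finite) ∧
  (∀ p : ℝ × ℝ, ∃ s : Finset ι, k ≤ s.card ∧ ∀ i ∈ s, p - x i ∈ K) ∧
  (∀ p : ℝ × ℝ, ∀ s : Finset ι, (∀ i ∈ s, p - x i ∈ interior K) → s.card ≤ k)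

/-- `P` is a (two-dimensional) convex polygon whose vertex set is the finite set `V`:
`P` is the convex hull of `V`, every element of `V` is an extreme point of `P`
(so `V` is exactly the vertex set), and `P` has nonempty interior. -/
def IsConvexPolygon (P : Set (ℝ × ℝ)) (V : Finset (ℝ × ℝ)) : Prop :=
  P = convexHull ℝ (V : Set (ℝ × ℝ)) ∧
  (∀ v ∈ V, v ∈ Set.extremePoints ℝ P) ∧
  (interior P).Nonempty

/-- `P` is symmetric about some point `c`. -/
def IsCentrallySymmetric (P : Set (ℝ × ℝ)) : Prop :=
  ∃ c : ℝ × ℝ, ∀ p ∈ P, 2 • c - p ∈ P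

/-- The segment `[a, b]` is an edge of the convex polygon `P` with vertex set `V`. -/
def IsEdge (P : Set (ℝ × ℝ)) (V : Finset (ℝ × ℝ)) (a b : ℝ × ℝ) : Prop :=
  a ∈ V ∧ b ∈ V ∧ a ≠ b ∧ segment ℝ a b ⊆ frontier P

/-!
**Every edge passes through every vertex point.** Let `p` be a vertex of some translate, let `F`
index the translates containing `p`, and `Φ` those containing `p` in their interior. Step from `p`
by a short displacement `w`, and by `-w`, in the direction of a line that meets `P` in the vertex
only. The translate with vertex `p` is missed by both steps, and a translate hit by both steps
contains `p` in its interior, so inclusion-exclusion gives `2k < |F| + |Φ|`. Suppose that no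
translate contains `p` on the edge corresponding to `[a, b]`. Step from `p` along `b - a`, and along
`a - b`, each time followed by a much smaller step that leads into `P` from the opposite edge. Every
translate in `F` then receives one of the two endpoints in its interior, and those in `Φ` receive
both, so `|F| + |Φ| ≤ 2k`, a contradiction.

**Edges that move into the interior.** Apply this to `p = v'`. For the edge vector `u = v∗ - v'` of
`G`, every vertex of `P` outside `G` and the opposite edge is moved into `int P` by either `u` or
`-u`, depending on the boundary chain it lies on. A chain of the dodecagon has `(12 - 4) / 2 = 4`
vertices and thus two disjoint edges. The translates having `v'` on these edges have `v∗`, hence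
also `v`, in their interior. Exchanging `v'` and `v∗` gives the other two translates.
-/

open Filter Topology Module

section Segments

variable {E : Type*} [AddCommGroup E] [Module ℝ E]

theorem mem_openSegment_add_smul (z u : E) {α β : ℝ} (hα : α < 0) (hβ : 0 < β) :
    z ∈ openSegment ℝ (z + α • u) (z + β • u) := by
  have hαβ : 0 < β - α := by linarith
  refine ⟨β / (β - α), -α / (β - α), by positivity, div_pos (neg_pos.2 hα) hαβ,
    by field_simp; ring, ?_⟩
  match_scalars <;> field_simp <;> ring

theorem sub_mem_openSegment (d : E) {x y z : E} (h : z ∈ openSegment ℝ x y) :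
    d - z ∈ openSegment ℝ (d - x) (d - y) := by
  obtain ⟨a, b, ha, hb, hab, rfl⟩ := h
  refine ⟨a, b, ha, hb, hab, ?_⟩
  obtain rfl : b = 1 - a := by linarith
  module

theorem sub_mem_segment (d : E) {x y z : E} (h : z ∈ segment ℝ x y) :
    d - z ∈ segment ℝ (d - x) (d - y) := by
  rw [← affineSegment_eq_segment] at h ⊢
  exact (mem_const_vsub_affineSegment d).2 h

theorem exists_mem_openSegment_apply_eq (f : Dual ℝ E) {p q : E} {r : ℝ} (hp : f p < r)
    (hq : r < f q) : ∃ y ∈ openSegment ℝ p q, f y = r := by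
  have h : r ∈ openSegment ℝ (f p) (f q) := by
    rw [openSegment_eq_Ioo (hp.trans hq)]
    exact ⟨hp, hq⟩
  rwa [← LinearMap.coe_toAffineMap, ← image_openSegment] at h

theorem eq_zero_of_mem_extremePoints {s : Set E} {p u : E} (hp : p ∈ s.extremePoints ℝ)
    {α β : ℝ} (hα : α < 0) (hβ : 0 < β) (h₁ : p + α • u ∈ s) (h₂ : p + β • u ∈ s) : u = 0 := by
  have h : p + α • u = p := hp.2 h₁ h₂ (mem_openSegment_add_smul p u hα hβ)
  simpa [hα.ne] using h

theorem sub_mem_extremePoints {s : Set E} {d p : E} (hs : ∀ y ∈ s, d - y ∈ s)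
    (hp : p ∈ s.extremePoints ℝ) : d - p ∈ s.extremePoints ℝ := by
  refine ⟨hs p hp.1, fun x hx y hy h => ?_⟩
  have hp' : p ∈ openSegment ℝ (d - x) (d - y) := by simpa using sub_mem_openSegment d h
  rw [← hp.2 (hs x hx) (hs y hy) hp', sub_sub_cancel]

end Segments

theorem sub_mem_interior {E : Type*} [AddGroup E] [TopologicalSpace E]
    [IsTopologicalAddGroup E] {s : Set E} {d y : E}
    (hs : ∀ y ∈ s, d - y ∈ s) (hy : y ∈ interior s) : d - y ∈ interior s :=
  (Homeomorph.subLeft d).isOpenMap.mapsTo_interior hs hy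

section IntermediateLevels

variable {E : Type*} [AddCommGroup E] [Module ℝ E] [TopologicalSpace E]

theorem extremePoints_convexHull_subset_exposedPoints [IsTopologicalAddGroup E]
    [ContinuousSMul ℝ E] [LocallyConvexSpace ℝ E] [T2Space E] {s : Set E} (hs : s.Finite) :
    (convexHull ℝ s).extremePoints ℝ ⊆ (convexHull ℝ s).exposedPoints ℝ := by
  intro p hp
  set K := convexHull ℝ (s \ {p})
  have hpK : p ∉ K := fun h =>
    ((convex_convexHull ℝ s).mem_extremePoints_iff_mem_sdiff_convexHull_sdiff.1 hp).2
      (convexHull_mono (Set.sdiff_subset_sdiff_left (subset_convexHull ℝ s)) h)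
  have hKclosed : IsClosed K := (hs.sdiff.isCompact_convexHull ℝ).isClosed
  obtain ⟨f, r, hfK, hfp⟩ :=
    geometric_hahn_banach_closed_point (convex_convexHull ℝ _) hKclosed hpK
  refine ⟨hp.1, f, ?_⟩
  suffices h : ∀ y ∈ convexHull ℝ s, y = p ∨ f y < f p from fun y hy =>
    ⟨(h y hy).elim (fun e => e ▸ le_rfl) le_of_lt, fun hle => (h y hy).resolve_right hle.not_gt⟩
  intro y hy
  rw [← Set.insert_sdiff_self_of_mem (extremePoints_convexHull_subset hp)] at hy
  rcases (s \ {p}).eq_empty_or_nonempty with hemp | hne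
  · simp_all
  rw [convexHull_insert hne, convexJoin_singleton_left, Set.mem_iUnion₂] at hy
  obtain ⟨k, hk, hy⟩ := hy
  rw [← insert_endpoints_openSegment] at hy
  have hfk : f k < f p := (hfK k hk).trans hfp
  obtain rfl | rfl | ⟨a, b, -, hb, hab, rfl⟩ := hy
  · exact .inl rfl
  · exact .inr hfk
  · right
    calc f (a • p + b • k) = a * f p + b * f k := by simp
      _ < a * f p + b * f p := by gcongr
      _ = f p := by rw [← add_mul, hab, one_mul]

theorem subset_closure_interior [IsTopologicalAddGroup E] [ContinuousSMul ℝ E] {s : Set E}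
    (hs : Convex ℝ s) (hne : (interior s).Nonempty) : s ⊆ closure (interior s) := by
  rw [hs.closure_interior_eq_closure_of_nonempty_interior hne]
  exact subset_closure

theorem exists_mem_interior_apply_eq [IsTopologicalAddGroup E] [ContinuousSMul ℝ E] {s : Set E}
    (hs : Convex ℝ s) (hne : (interior s).Nonempty) {f : StrongDual ℝ E} {p q : E} {r : ℝ}
    (hp : p ∈ s) (hq : q ∈ s) (hfp : f p < r) (hfq : r < f q) : ∃ y ∈ interior s, f y = r := by
  have hcl := subset_closure_interior hs hne
  obtain ⟨p', hp', hp'i⟩ :=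
    mem_closure_iff.1 (hcl hp) {y | f y < r} (isOpen_Iio.preimage f.continuous) hfp
  obtain ⟨q', hq', hq'i⟩ :=
    mem_closure_iff.1 (hcl hq) {y | r < f y} (isOpen_Ioi.preimage f.continuous) hfq
  exact hs.interior.isPreconnected.intermediate_value hp'i hq'i f.continuous.continuousOn
    ⟨le_of_lt hp', le_of_lt hq'⟩

end IntermediateLevels

section Plane

variable {E : Type*} [AddCommGroup E] [Module ℝ E] [TopologicalSpace E] [Fact (finrank ℝ E = 2)]

theorem exists_eq_add_smul_of_apply_eq {f : StrongDual ℝ E} (hf : f ≠ 0) {u : E} (hu : u ≠ 0)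
    (hfu : f u = 0) {y z : E} (h : f y = f z) : ∃ r : ℝ, y = z + r • u := by
  have : FiniteDimensional ℝ E := .of_fact_finrank_eq_two
  have hker : finrank ℝ f.ker = 1 := by
    have := Dual.finrank_ker_add_one_of_ne_zero (f := f.toLinearMap) fun h =>
      hf (ContinuousLinearMap.coe_injective h)
    rw [Fact.out (p := finrank ℝ E = 2)] at this
    exact Nat.succ_injective this
  obtain ⟨r, hr⟩ := exists_smul_eq_of_finrank_eq_one hker (x := ⟨u, hfu⟩)
    (fun h => hu (congrArg Subtype.val h)) ⟨y - z, by simp [h]⟩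
  refine ⟨r, ?_⟩
  have hr' : r • u = y - z := congrArg Subtype.val hr
  rw [hr', add_sub_cancel]

theorem exists_ne_zero_apply_eq_zero (f : StrongDual ℝ E) : ∃ u ≠ 0, f u = 0 := by
  have : FiniteDimensional ℝ E := .of_fact_finrank_eq_two
  have hker : f.ker ≠ ⊥ := LinearMap.ker_ne_bot_of_finrank_lt (by
    rw [finrank_self, Fact.out (p := finrank ℝ E = 2)]
    exact one_lt_two)
  obtain ⟨u, hu, hu0⟩ := (Submodule.ne_bot_iff _).1 hker
  exact ⟨u, hu0, hu⟩

theorem mem_segment_of_mem_extremePoints {s : Set E} {p q z : E} (hp : p ∈ s.extremePoints ℝ)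
    (hq : q ∈ s.extremePoints ℝ) (hpq : p ≠ q) {f : StrongDual ℝ E} (hf : f ≠ 0)
    (hfpq : f q = f p) (hz : z ∈ s) (hfz : f z = f p) : z ∈ segment ℝ p q := by
  have hu : q - p ≠ 0 := sub_ne_zero.2 hpq.symm
  obtain ⟨r, rfl⟩ := exists_eq_add_smul_of_apply_eq hf hu (by simp [hfpq]) hfz
  rw [segment_eq_image']
  refine ⟨r, ⟨?_, ?_⟩, rfl⟩
  · by_contra! hr
    exact hu (eq_zero_of_mem_extremePoints hp hr one_pos hz (by simpa using hq.1))
  · by_contra! hr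
    refine hu (eq_zero_of_mem_extremePoints hq (α := -1) (β := r - 1) (by simp) (by linarith)
      ?_ ?_)
    · simpa using hp.1
    · convert hz using 1
      module

theorem apply_le_of_mem_extremePoints {s : Set E} {p u m : E} (hp : p ∈ s.extremePoints ℝ)
    (hpu : p + u ∈ s) {f g : StrongDual ℝ E} (hf : f ≠ 0) (hfu : f u = 0) (hgu : 0 < g u)
    (hm : m ∈ s) (hfm : f m = f p) : g p ≤ g m := by
  have hu : u ≠ 0 := by
    rintro rfl
    simp at hgu
  obtain ⟨r, rfl⟩ := exists_eq_add_smul_of_apply_eq hf hu hfu hfm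
  have hr : 0 ≤ r := by
    by_contra! hr
    exact hu (eq_zero_of_mem_extremePoints hp hr one_pos hm (by simpa using hpu))
  simpa using mul_nonneg hr hgu.le

variable [IsTopologicalAddGroup E] [ContinuousSMul ℝ E]

theorem mem_interior_of_add_smul_mem {s : Set E} (hs : Convex ℝ s) (hne : (interior s).Nonempty)
    {f : StrongDual ℝ E} {p q z u : E} (hp : p ∈ s) (hq : q ∈ s) (hpz : f p < f z)
    (hzq : f z < f q) (hu : u ≠ 0) (hfu : f u = 0) {α β : ℝ} (hα : α < 0) (hβ : 0 < β)
    (h₁ : z + α • u ∈ s) (h₂ : z + β • u ∈ s) : z ∈ interior s := by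
  have hf : f ≠ 0 := by
    rintro rfl
    simp at hpz
  obtain ⟨y, hy, hyz⟩ := exists_mem_interior_apply_eq hs hne hp hq hpz hzq
  obtain ⟨r, rfl⟩ := exists_eq_add_smul_of_apply_eq hf hu hfu hyz
  rcases lt_trichotomy r 0 with hr | rfl | hr
  · exact hs.openSegment_interior_self_subset_interior hy h₂ (mem_openSegment_add_smul z u hr hβ)
  · simpa using hy
  · exact hs.openSegment_self_interior_subset_interior h₁ hy (mem_openSegment_add_smul z u hα hr)

end Plane

section EdgeFunctionals

variable {E : Type*} [AddCommGroup E] [Module ℝ E] [TopologicalSpace E]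

/-- `f` is an outer normal functional of `s` along the segment from `a` to `b`: a nonzero
functional whose maximum over `s` is attained at both endpoints (`a` and `b` are not required to
lie in `s`, nor to be distinct). -/
structure IsEdgeFunctional (s : Set E) (a b : E) (f : StrongDual ℝ E) : Prop where
  ne_zero : f ≠ 0
  map_eq : f b = f a
  le : ∀ y ∈ s, f y ≤ f a

variable {s : Set E} {a b : E} {f : StrongDual ℝ E}

theorem IsEdgeFunctional.apply_sub_eq_zero (hf : IsEdgeFunctional s a b f) : f (b - a) = 0 := by
  rw [map_sub, hf.map_eq, sub_self]

theorem IsEdgeFunctional.apply_le_apply_of_symmetric (hf : IsEdgeFunctional s a b f) {d : E}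
    (hsym : ∀ y ∈ s, d - y ∈ s) {y : E} (hy : y ∈ s) : f (d - a) ≤ f y := by
  have h := hf.le _ (hsym y hy)
  simp only [map_sub] at h ⊢
  linarith

variable [IsTopologicalAddGroup E] [ContinuousSMul ℝ E]

theorem IsEdgeFunctional.lt_of_mem_interior (hf : IsEdgeFunctional s a b f) {y : E}
    (hy : y ∈ interior s) : f y < f a := by
  have h := (f.isOpenMap_of_ne_zero hf.ne_zero).mapsTo_interior (t := Set.Iic (f a)) hf.le hy
  rwa [interior_Iic] at h

theorem IsEdgeFunctional.segment_subset_frontier (hf : IsEdgeFunctional s a b f)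
    (hs : Convex ℝ s) (ha : a ∈ s) (hb : b ∈ s) : segment ℝ a b ⊆ frontier s := by
  intro z hz
  refine ⟨subset_closure (hs.segment_subset ha hb hz), fun hz' => ?_⟩
  obtain ⟨α, β, -, -, hαβ, rfl⟩ := hz
  have hlt := hf.lt_of_mem_interior hz'
  simp [hf.map_eq, ← add_mul, hαβ] at hlt

theorem exists_isEdgeFunctional (hs : Convex ℝ s) (hne : (interior s).Nonempty) (ha : a ∈ s)
    (hb : b ∈ s) (hab : segment ℝ a b ⊆ frontier s) : ∃ f, IsEdgeFunctional s a b f := by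
  have hm : midpoint ℝ a b ∉ interior s := (hab (midpoint_mem_segment a b)).2
  obtain ⟨f, hf⟩ := geometric_hahn_banach_open_point hs.interior isOpen_interior hm
  have hle : ∀ y ∈ s, f y ≤ f (midpoint ℝ a b) :=
    (subset_closure_interior hs hne).trans <|
      closure_minimal (fun y hy => (hf y hy).le) (isClosed_le f.continuous continuous_const)
  have hmid : f (midpoint ℝ a b) = (f a + f b) / 2 := by
    rw [midpoint_eq_smul_add, map_smul, map_add, invOf_eq_inv, smul_eq_mul, inv_mul_eq_div]
  rw [hmid] at hle
  have hab' : f b = f a := by linarith [hle a ha, hle b hb]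
  refine ⟨f, ?_, hab', fun y hy => by linarith [hle y hy]⟩
  rintro rfl
  obtain ⟨y, hy⟩ := hne
  simpa using hf y hy

end EdgeFunctionals

section ParallelEdges

variable {E : Type*} [AddCommGroup E] [Module ℝ E] [TopologicalSpace E] [Fact (finrank ℝ E = 2)]

theorem eq_of_mem_extremePoints_of_apply_eq {s : Set E} {p q u : E}
    (hp : p ∈ s.extremePoints ℝ) (hq : q ∈ s.extremePoints ℝ) (hpu : p + u ∈ s) (hqu : q + u ∈ s)
    (hu : u ≠ 0) {f : StrongDual ℝ E} (hf : f ≠ 0) (hfu : f u = 0) (hpq : f p = f q) : p = q := by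
  obtain ⟨r, rfl⟩ := exists_eq_add_smul_of_apply_eq hf hu hfu hpq.symm
  rcases lt_trichotomy r 0 with hr | rfl | hr
  · exact absurd (eq_zero_of_mem_extremePoints hp hr one_pos hq.1 (by simpa using hpu)) hu
  · simp
  · exact absurd (eq_zero_of_mem_extremePoints hq (neg_lt_zero.2 hr) one_pos
      (by simpa using hp.1) (by simpa using hqu)) hu

theorem apply_le_apply_of_forall_sub_mem {s : Set E} (hs : Convex ℝ s) {p q u v : E}
    (hp : p ∈ s.extremePoints ℝ) (hq : q ∈ s.extremePoints ℝ) (hv : v ∈ s.extremePoints ℝ)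
    (hpu : p + u ∈ s) (hqu : q + u ∈ s) {f g : StrongDual ℝ E} (hf : f ≠ 0) (hfu : f u = 0)
    (hgu : 0 < g u) (hpq : f p < f q) (hgpq : g q = g p)
    (hvu : f p < f v → f v < f q → v - u ∈ s) : g p ≤ g v := by
  have le_of_openSegment {y z m : E} (hm : m ∈ openSegment ℝ y z) (hgm : g p ≤ g m)
      (hgz : g z = g p) : g p ≤ g y := by
    obtain ⟨α, β, hα, -, hαβ, rfl⟩ := hm
    have hα' : 0 ≤ α * (g y - g p) := by
      simp only [map_add, map_smul, smul_eq_mul, hgz, eq_sub_of_add_eq' hαβ] at hgm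
      linarith
    exact sub_nonneg.1 ((mul_nonneg_iff_of_pos_left hα).1 hα')
  rcases lt_trichotomy (f v) (f p) with hvp | hvp | hpv
  · obtain ⟨m, hm, hfm⟩ := exists_mem_openSegment_apply_eq f.toLinearMap hvp hpq
    exact le_of_openSegment hm (apply_le_of_mem_extremePoints hp hpu hf hfu hgu
      (hs.openSegment_subset hv.1 hq.1 hm) hfm) hgpq
  · exact apply_le_of_mem_extremePoints hp hpu hf hfu hgu hv.1 hvp
  rcases lt_trichotomy (f v) (f q) with hvq | hvq | hqv
  · obtain ⟨m, hm, hfm⟩ := exists_mem_openSegment_apply_eq f.toLinearMap hpv hvq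
    have hle : -g v ≤ -g m := apply_le_of_mem_extremePoints (g := -g) hv
      (sub_eq_add_neg v u ▸ hvu hpv hvq) hf (by simp [hfu]) (by simpa using hgu)
      (hs.openSegment_subset hp.1 hq.1 hm) hfm
    obtain ⟨α, β, -, -, hαβ, rfl⟩ := hm
    simpa [hgpq, ← add_mul, hαβ] using hle
  · exact hgpq ▸ apply_le_of_mem_extremePoints hq hqu hf hfu hgu hv.1 hvq
  · obtain ⟨m, hm, hfm⟩ := exists_mem_openSegment_apply_eq f.toLinearMap hpq hqv
    rw [openSegment_symm] at hm
    exact le_of_openSegment hm (hgpq ▸ apply_le_of_mem_extremePoints hq hqu hf hfu hgu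
      (hs.openSegment_subset hp.1 hv.1 (openSegment_symm ℝ p v ▸ hm)) hfm) rfl

variable [IsTopologicalAddGroup E] [ContinuousSMul ℝ E]

theorem add_or_sub_mem_interior_of_apply_eq {s : Set E} (hs : Convex ℝ s)
    (hne : (interior s).Nonempty) {f : StrongDual ℝ E} {p q u v y : E} (hp : p ∈ s) (hq : q ∈ s)
    (hu : u ≠ 0) (hfu : f u = 0) (hv : v ∈ s.extremePoints ℝ) (hpv : f p < f v) (hvq : f v < f q)
    (hy : y ∈ s) (hyu : y + u ∈ s) (hfy : f y = f v) (hvy : v ≠ y) (hvyu : v ≠ y + u) :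
    v + u ∈ interior s ∨ v - u ∈ interior s := by
  have hf : f ≠ 0 := by
    rintro rfl
    simp at hpv
  obtain ⟨r, rfl⟩ := exists_eq_add_smul_of_apply_eq hf hu hfu hfy.symm
  have mem_interior {c α β : ℝ} (hα : α < 0) (hβ : 0 < β) (h₁ : y + (c + α) • u ∈ s)
      (h₂ : y + (c + β) • u ∈ s) : y + c • u ∈ interior s := by
    simp only [add_smul, ← add_assoc] at h₁ h₂
    have hfc : f (y + c • u) = f (y + r • u) := by simp [hfu]
    exact mem_interior_of_add_smul_mem hs hne hp hq (hfc ▸ hpv) (hfc ▸ hvq) hu hfu hα hβ h₁ h₂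
  have hr : r < 0 ∨ 1 < r := by
    by_contra! hr
    have hmem : y + r • u ∈ segment ℝ y (y + u) := by
      rw [segment_eq_image']
      exact ⟨r, hr, by simp⟩
    rcases (mem_extremePoints_iff_forall_segment.1 hv).2 y hy _ hyu hmem with h | h
    · exact hvy h.symm
    · exact hvyu h.symm
  rcases hr with hr | hr
  · left
    convert mem_interior (c := r + 1) (α := -1) (β := -r) (by simp) (neg_pos.2 hr) ?_ ?_ using 1
    · module
    · simpa using hv.1
    · simpa using hyu
  · right
    convert mem_interior (c := r - 1) (α := 1 - r) (β := 1) (by linarith) one_pos ?_ ?_ using 1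
    · module
    · simpa using hy
    · simpa using hv.1

theorem IsEdgeFunctional.add_or_sub_mem_interior {s : Set E} (hs : Convex ℝ s)
    (hne : (interior s).Nonempty) {a b d v : E} (hsym : ∀ y ∈ s, d - y ∈ s) (ha : a ∈ s)
    (hb : b ∈ s) (hab : a ≠ b) {f : StrongDual ℝ E} (hf : IsEdgeFunctional s a b f)
    (hv : v ∈ s.extremePoints ℝ) (hva : f v < f a) (hvd : f (d - a) < f v) :
    v + (b - a) ∈ interior s ∨ v - (b - a) ∈ interior s := by
  have hfb : f (d - b) = f (d - a) := by simp [hf.map_eq]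
  obtain ⟨y, hy, hfy⟩ := exists_mem_openSegment_apply_eq f.toLinearMap (hfb.trans_lt hvd) hva
  have hyb : y + (b - a) ∈ openSegment ℝ (d - a) b := by
    have h := (mem_openSegment_translate ℝ (b - a)).2 hy
    rwa [sub_add_sub_cancel', sub_add_cancel, add_comm] at h
  refine add_or_sub_mem_interior_of_apply_eq hs hne (hsym a ha) ha (sub_ne_zero.2 hab.symm)
    hf.apply_sub_eq_zero hv hvd hva (hs.openSegment_subset (hsym b hb) ha hy)
    (hs.openSegment_subset (hsym a ha) hb hyb) hfy ?_ ?_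
  · rintro rfl
    exact hvd.ne' ((congrArg f (hv.2 (hsym b hb) ha hy)).symm.trans hfb)
  · rintro rfl
    exact hvd.ne' (congrArg f (hv.2 (hsym a ha) hb hyb)).symm

end ParallelEdges

instance fact_finrank_real_prod_real : Fact (finrank ℝ (ℝ × ℝ) = 2) := ⟨by simp⟩

theorem exists_strictMono_comp_range_eq {α : Type*} (s : Finset α) {f : α → ℝ}
    (hf : Set.InjOn f s) :
    ∃ w : Fin s.card → α, StrictMono (f ∘ w) ∧ Set.range w = s := by
  have hcard : (s.image f).card = s.card := Finset.card_image_of_injOn hf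
  have hmem (i : Fin s.card) : ∃ a ∈ s, f a = (s.image f).orderEmbOfFin hcard i :=
    Finset.mem_image.1 (Finset.orderEmbOfFin_mem _ hcard i)
  choose w hws hw using hmem
  refine ⟨w, ?_, Set.Subset.antisymm (Set.range_subset_iff.2 hws) fun a ha => ?_⟩
  · rw [show f ∘ w = _ from funext hw]
    exact ((s.image f).orderEmbOfFin hcard).strictMono
  · obtain ⟨i, hi⟩ : f a ∈ Set.range ((s.image f).orderEmbOfFin hcard) := by
      rw [Finset.range_orderEmbOfFin]
      exact Finset.mem_image_of_mem f ha
    exact ⟨i, hf (hws i) ha ((hw i).trans hi)⟩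

open Classical in
/-- The vertices `v ∈ V` for which `v + u` is an interior point of `P`. When `u` is an edge vector
of a centrally symmetric polygon `P`, these are the vertices of one of the two open boundary
chains joining the edge to its opposite. -/
noncomputable def chainVertices (P : Set (ℝ × ℝ)) (V : Finset (ℝ × ℝ)) (u : ℝ × ℝ) :
    Finset (ℝ × ℝ) :=
  V.filter fun v => v + u ∈ interior P

theorem mem_chainVertices {P : Set (ℝ × ℝ)} {V : Finset (ℝ × ℝ)} {u v : ℝ × ℝ} :
    v ∈ chainVertices P V u ↔ v ∈ V ∧ v + u ∈ interior P := by
  classical exact Finset.mem_filter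

section ChainHeights

variable {P : Set (ℝ × ℝ)} {V : Finset (ℝ × ℝ)} {a b v : ℝ × ℝ} {f : StrongDual ℝ (ℝ × ℝ)}

theorem IsEdgeFunctional.apply_lt_of_mem_chainVertices (hf : IsEdgeFunctional P a b f)
    (hv : v ∈ chainVertices P V (b - a)) : f v < f a := by
  simpa [hf.map_eq] using hf.lt_of_mem_interior (mem_chainVertices.1 hv).2

theorem IsEdgeFunctional.lt_apply_of_mem_chainVertices (hf : IsEdgeFunctional P a b f) {d : ℝ × ℝ}
    (hsym : ∀ y ∈ P, d - y ∈ P) (hv : v ∈ chainVertices P V (b - a)) :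
    f (d - a) < f v := by
  have h := hf.lt_of_mem_interior (sub_mem_interior hsym (mem_chainVertices.1 hv).2)
  simp only [map_sub, map_add, hf.map_eq, sub_self, add_zero] at h ⊢
  linarith

end ChainHeights

theorem IsEdge.symm {P : Set (ℝ × ℝ)} {V : Finset (ℝ × ℝ)} {a b : ℝ × ℝ} (h : IsEdge P V a b) :
    IsEdge P V b a :=
  ⟨h.2.1, h.1, h.2.2.1.symm, segment_symm ℝ a b ▸ h.2.2.2⟩

namespace IsConvexPolygon

variable {P : Set (ℝ × ℝ)} {V : Finset (ℝ × ℝ)}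

theorem convex (hP : IsConvexPolygon P V) : Convex ℝ P :=
  hP.1 ▸ convex_convexHull ℝ _

theorem isCompact (hP : IsConvexPolygon P V) : IsCompact P :=
  hP.1 ▸ V.finite_toSet.isCompact_convexHull ℝ

theorem mem_iff_mem_extremePoints (hP : IsConvexPolygon P V) {v : ℝ × ℝ} :
    v ∈ V ↔ v ∈ P.extremePoints ℝ :=
  ⟨hP.2.1 v, fun hv => extremePoints_convexHull_subset (hP.1 ▸ hv)⟩

theorem mem_exposedPoints (hP : IsConvexPolygon P V) {v : ℝ × ℝ} (hv : v ∈ V) :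
    v ∈ P.exposedPoints ℝ := by
  have hv' := hP.2.1 v hv
  rw [hP.1] at hv' ⊢
  exact extremePoints_convexHull_subset_exposedPoints V.finite_toSet hv'

theorem exists_isEdgeFunctional (hP : IsConvexPolygon P V) {a b : ℝ × ℝ} (hab : IsEdge P V a b) :
    ∃ f, IsEdgeFunctional P a b f :=
  _root_.exists_isEdgeFunctional hP.convex hP.2.2 (hP.2.1 a hab.1).1 (hP.2.1 b hab.2.1).1 hab.2.2.2

theorem isEdge_of_forall_le (hP : IsConvexPolygon P V) {a b : ℝ × ℝ} (ha : a ∈ V) (hb : b ∈ V)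
    (hab : a ≠ b) {f : StrongDual ℝ (ℝ × ℝ)} (hf : f ≠ 0) (hfab : f b = f a)
    (hle : ∀ v ∈ V, f v ≤ f a) : IsEdge P V a b := by
  have hleP : P ⊆ {y | f y ≤ f a} := by
    rw [hP.1]
    exact convexHull_min hle (convex_halfSpace_le f.toLinearMap.isLinear _)
  have hf' : IsEdgeFunctional P a b f := ⟨hf, hfab, hleP⟩
  exact ⟨ha, hb, hab, hf'.segment_subset_frontier hP.convex (hP.2.1 a ha).1 (hP.2.1 b hb).1⟩

theorem eq_or_eq_of_apply_eq (hP : IsConvexPolygon P V) {a b v : ℝ × ℝ} (hab : IsEdge P V a b)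
    {f : StrongDual ℝ (ℝ × ℝ)} (hf : IsEdgeFunctional P a b f) (hv : v ∈ V) (hfv : f v = f a) :
    v = a ∨ v = b := by
  have hmem := mem_segment_of_mem_extremePoints (hP.2.1 a hab.1) (hP.2.1 b hab.2.1) hab.2.2.1
    hf.ne_zero hf.map_eq (hP.2.1 v hv).1 hfv
  exact ((mem_extremePoints_iff_forall_segment.1 (hP.2.1 v hv)).2 a (hP.2.1 a hab.1).1 b
    (hP.2.1 b hab.2.1).1 hmem).imp Eq.symm Eq.symm

variable {d : ℝ × ℝ}

theorem sub_mem_vertices (hP : IsConvexPolygon P V) (hsym : ∀ y ∈ P, d - y ∈ P) {v : ℝ × ℝ}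
    (hv : v ∈ V) : d - v ∈ V :=
  hP.mem_iff_mem_extremePoints.2 (sub_mem_extremePoints hsym (hP.2.1 v hv))

theorem mem_or_add_mem_interior_or_sub_mem_interior (hP : IsConvexPolygon P V)
    (hsym : ∀ y ∈ P, d - y ∈ P) {a b v : ℝ × ℝ} (hab : IsEdge P V a b) (hv : v ∈ V) :
    v ∈ ({a, b, d - a, d - b} : Finset (ℝ × ℝ)) ∨ v + (b - a) ∈ interior P ∨
      v - (b - a) ∈ interior P := by
  obtain ⟨f, hf⟩ := hP.exists_isEdgeFunctional hab
  rcases (hf.le v (hP.2.1 v hv).1).eq_or_lt with hva | hva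
  · rcases hP.eq_or_eq_of_apply_eq hab hf hv hva with rfl | rfl <;> simp
  rcases (hf.apply_le_apply_of_symmetric hsym (hP.2.1 v hv).1).eq_or_lt with hvd | hvd
  · have hvd' : f (d - v) = f a := by rw [map_sub, ← hvd, map_sub, sub_sub_cancel]
    rcases hP.eq_or_eq_of_apply_eq hab hf (hP.sub_mem_vertices hsym hv) hvd' with h | h <;>
      simp [← h]
  · exact .inr <| hf.add_or_sub_mem_interior hP.convex hP.2.2 hsym (hP.2.1 a hab.1).1
      (hP.2.1 b hab.2.1).1 hab.2.2.1 (hP.2.1 v hv) hva hvd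

theorem card_le_two_mul_card_chainVertices_add_four (hP : IsConvexPolygon P V)
    (hsym : ∀ y ∈ P, d - y ∈ P) {a b : ℝ × ℝ} (hab : IsEdge P V a b) :
    V.card ≤ 2 * (chainVertices P V (b - a)).card + 4 := by
  classical
  set W := chainVertices P V (b - a)
  have hsub : V ⊆ (W ∪ W.image (d - ·)) ∪ {a, b, d - a, d - b} := by
    intro v hv
    simp only [Finset.mem_union]
    rcases hP.mem_or_add_mem_interior_or_sub_mem_interior hsym hab hv with h | h | h
    · exact .inr h
    · exact .inl (.inl (mem_chainVertices.2 ⟨hv, h⟩))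
    · refine .inl (.inr (Finset.mem_image.2 ⟨d - v, mem_chainVertices.2
        ⟨hP.sub_mem_vertices hsym hv, ?_⟩, sub_sub_cancel d v⟩))
      rw [sub_add]
      exact sub_mem_interior hsym h
  calc V.card ≤ W.card + (W.image (d - ·)).card + 4 := by
        refine (Finset.card_le_card hsub).trans ((Finset.card_union_le _ _).trans ?_)
        gcongr
        exacts [Finset.card_union_le _ _, Finset.card_le_four]
    _ ≤ 2 * W.card + 4 := by linarith [W.card_image_le (f := (d - ·))]

section Chain

variable {a b : ℝ × ℝ} {f : StrongDual ℝ (ℝ × ℝ)}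

theorem injOn_chainVertices (hP : IsConvexPolygon P V) (hab : a ≠ b)
    (hf : IsEdgeFunctional P a b f) : Set.InjOn f (chainVertices P V (b - a)) := by
  intro v hv w hw hvw
  obtain ⟨hv, hvi⟩ := mem_chainVertices.1 hv
  obtain ⟨hw, hwi⟩ := mem_chainVertices.1 hw
  exact eq_of_mem_extremePoints_of_apply_eq (hP.2.1 v hv) (hP.2.1 w hw) (interior_subset hvi)
    (interior_subset hwi) (sub_ne_zero.2 hab.symm) hf.ne_zero hf.apply_sub_eq_zero hvw

theorem sub_mem_of_notMem_chainVertices (hP : IsConvexPolygon P V) (hsym : ∀ y ∈ P, d - y ∈ P)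
    (hab : IsEdge P V a b) (hf : IsEdgeFunctional P a b f) {v : ℝ × ℝ} (hv : v ∈ V)
    (hvW : v ∉ chainVertices P V (b - a)) (hva : f v < f a) (hvd : f (d - a) < f v) :
    v - (b - a) ∈ P := by
  rcases hf.add_or_sub_mem_interior hP.convex hP.2.2 hsym (hP.2.1 a hab.1).1
    (hP.2.1 b hab.2.1).1 hab.2.2.1 (hP.2.1 v hv) hva hvd with h | h
  · exact absurd (mem_chainVertices.2 ⟨hv, h⟩) hvW
  · exact interior_subset h

theorem isEdge_of_consecutive (hP : IsConvexPolygon P V) (hsym : ∀ y ∈ P, d - y ∈ P)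
    (hab : IsEdge P V a b) (hf : IsEdgeFunctional P a b f) {p q : ℝ × ℝ}
    (hp : p ∈ chainVertices P V (b - a)) (hq : q ∈ chainVertices P V (b - a)) (hpq : f p < f q)
    (hcons : ∀ v ∈ chainVertices P V (b - a), f p < f v → f q ≤ f v) : IsEdge P V p q := by
  obtain ⟨hpV, hpi⟩ := mem_chainVertices.1 hp
  obtain ⟨hqV, hqi⟩ := mem_chainVertices.1 hq
  obtain ⟨φ, hφ⟩ := SeparatingDual.exists_eq_one (R := ℝ) (sub_ne_zero.2 hab.2.2.1.symm)
  -- `-g` is an outer normal functional along `[p, q]`.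
  let g : StrongDual ℝ (ℝ × ℝ) := f (q - p) • φ - φ (q - p) • f
  have hgu : 0 < g (b - a) := by simpa [g, hφ, hf.apply_sub_eq_zero] using hpq
  have hgpq : g q = g p := by
    have : g (q - p) = 0 := by
      simp only [g, sub_apply, smul_apply, smul_eq_mul]
      ring
    rwa [map_sub, sub_eq_zero] at this
  have hg : -g ≠ 0 := by
    intro h
    simp [neg_eq_zero.1 h] at hgu
  refine hP.isEdge_of_forall_le hpV hqV (fun h => hpq.ne (congrArg f h)) hg (by simp [hgpq])
    fun v hv => neg_le_neg (apply_le_apply_of_forall_sub_mem hP.convex (hP.2.1 p hpV)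
      (hP.2.1 q hqV) (hP.2.1 v hv) (interior_subset hpi) (interior_subset hqi) hf.ne_zero
      hf.apply_sub_eq_zero hgu hpq hgpq fun hpv hvq => ?_)
  exact hP.sub_mem_of_notMem_chainVertices hsym hab hf hv
    (fun hvW => hvq.not_ge (hcons v hvW hpv)) (hvq.trans (hf.apply_lt_of_mem_chainVertices hq))
    ((hf.lt_apply_of_mem_chainVertices hsym hp).trans hpv)

theorem exists_disjoint_edges_add_mem_interior (hP : IsConvexPolygon P V)
    (hsym : ∀ y ∈ P, d - y ∈ P) (hab : IsEdge P V a b) {n : ℕ} (hn : 4 * n + 4 ≤ V.card) :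
    ∃ p q : Fin n → ℝ × ℝ, (∀ i, IsEdge P V (p i) (q i)) ∧
      Pairwise (Function.onFun Disjoint fun i => segment ℝ (p i) (q i)) ∧
      ∀ i, ∀ z ∈ segment ℝ (p i) (q i), z + (b - a) ∈ interior P := by
  obtain ⟨f, hf⟩ := hP.exists_isEdgeFunctional hab
  obtain ⟨w, hw, hrange⟩ :=
    exists_strictMono_comp_range_eq _ (hP.injOn_chainVertices hab.2.2.1 hf)
  have hwmem (l) : w l ∈ chainVertices P V (b - a) := hrange.le (Set.mem_range_self l)
  have hcard : 2 * n ≤ (chainVertices P V (b - a)).card := by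
    linarith [hP.card_le_two_mul_card_chainVertices_add_four hsym hab]
  let p (i : Fin n) := w ⟨2 * i, by omega⟩
  let q (i : Fin n) := w ⟨2 * i + 1, by omega⟩
  have hpq (i) : f (p i) < f (q i) := hw (Fin.mk_lt_mk.2 (Nat.lt_succ_self _))
  refine ⟨p, q, fun i => ?_, ?_, fun i z hz => ?_⟩
  · refine hP.isEdge_of_consecutive hsym hab hf (hwmem _) (hwmem _) (hpq i) fun v hv hpv => ?_
    obtain ⟨l, rfl⟩ := hrange.ge hv
    exact hw.monotone (Fin.mk_le_of_le_val (Fin.lt_def.1 (hw.lt_iff_lt.1 hpv)))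
  · rw [pairwise_disjoint_on]
    refine fun i l hil => Set.disjoint_left.2 fun z hz hz' => ?_
    have hql : f (q i) < f (p l) := hw (Fin.mk_lt_mk.2 (by omega))
    have hle : f z ≤ f (q i) :=
      (convex_halfSpace_le f.toLinearMap.isLinear _).segment_subset (hpq i).le
        (le_refl (f (q i))) hz
    have hge : f (p l) ≤ f z :=
      (convex_halfSpace_ge f.toLinearMap.isLinear _).segment_subset
        (le_refl (f (p l))) (hpq l).le hz'
    exact (hql.trans_le hge).not_ge hle
  · have hz' : (b - a) + z ∈ segment ℝ ((b - a) + p i) ((b - a) + q i) :=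
      (mem_segment_translate ℝ (b - a)).2 hz
    rw [add_comm _ z, add_comm _ (p i), add_comm _ (q i)] at hz'
    exact hP.convex.interior.segment_subset (mem_chainVertices.1 (hwmem _)).2
      (mem_chainVertices.1 (hwmem _)).2 hz'

end Chain

end IsConvexPolygon

section FlagFilter

variable {E : Type*} [AddCommGroup E] [Module ℝ E] [TopologicalSpace E]

/-- The filter of displacements `t • u + δ • w` with `0 < δ ≪ t ≪ 1`: infinitesimally small steps
along `u`, followed by steps along `w` which are infinitesimal even compared to these. -/
def flagFilter (u w : E) : Filter E :=
  (𝓝[>] (0 : ℝ)).bind fun t => (𝓝[>] (0 : ℝ)).map fun δ => t • u + δ • w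

instance flagFilter_neBot (u w : E) : (flagFilter u w).NeBot := by
  refine neBot_iff.2 fun h => ?_
  have : ∀ᶠ _ in flagFilter u w, False := h ▸ eventually_bot
  simp [flagFilter, eventually_bind, (inferInstance : (𝓝[>] (0 : ℝ)).NeBot).ne] at this

variable [IsTopologicalAddGroup E] [ContinuousSMul ℝ E] {s : Set E}

theorem tendsto_add_smul_nhds_zero (z u : E) : Tendsto (fun t : ℝ => z + t • u) (𝓝 0) (𝓝 z) := by
  have h : ContinuousAt (fun t : ℝ => z + t • u) 0 := by fun_prop
  simpa [ContinuousAt] using h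

theorem eventually_add_smul_mem_interior {z : E} (hz : z ∈ interior s) (u : E) :
    ∀ᶠ t in 𝓝[>] (0 : ℝ), z + t • u ∈ interior s :=
  (tendsto_add_smul_nhds_zero z u).eventually (isOpen_interior.mem_nhds hz)
    |>.filter_mono nhdsWithin_le_nhds

theorem eventually_flagFilter_of_eventually {z u : E}
    (h : ∀ᶠ t in 𝓝[>] (0 : ℝ), z + t • u ∈ interior s) (w : E) :
    ∀ᶠ y in flagFilter u w, z + y ∈ interior s := by
  rw [flagFilter, eventually_bind]
  filter_upwards [h] with t ht
  simpa only [eventually_map, ← add_assoc] using eventually_add_smul_mem_interior ht w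

theorem eventually_flagFilter_of_mem_interior {z : E} (hz : z ∈ interior s) (u w : E) :
    ∀ᶠ y in flagFilter u w, z + y ∈ interior s :=
  eventually_flagFilter_of_eventually (eventually_add_smul_mem_interior hz u) w

theorem flagFilter_le_nhds_zero (u w : E) : flagFilter u w ≤ 𝓝 0 := by
  intro U hU
  filter_upwards [eventually_flagFilter_of_mem_interior (mem_interior_iff_mem_nhds.2 hU) u w]
    with y hy
  simpa using interior_subset hy

theorem eventually_flagFilter_of_add_smul_mem_interior (hs : Convex ℝ s) {z u : E} {r : ℝ}
    (hr : 0 < r) (hz : z ∈ s) (hzr : z + r • u ∈ interior s) (w : E) :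
    ∀ᶠ y in flagFilter u w, z + y ∈ interior s := by
  refine eventually_flagFilter_of_eventually ?_ w
  filter_upwards [Ioo_mem_nhdsGT hr] with t ht
  have h := hs.add_smul_mem_interior hz hzr (t := t / r)
    ⟨div_pos ht.1 hr, (div_le_one hr).2 ht.2.le⟩
  rwa [smul_smul, div_mul_cancel₀ _ hr.ne'] at h

theorem eventually_flagFilter_of_mem_segment (hs : Convex ℝ s) {a b m z : E} (ha : a ∈ s)
    (hb : b ∈ s) (hm : m ∈ interior s) (hz : z ∈ segment ℝ a b) (hzb : z ≠ b) :
    ∀ᶠ y in flagFilter (b - a) (m - midpoint ℝ a b), z + y ∈ interior s := by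
  rw [segment_eq_image'] at hz
  obtain ⟨r, ⟨hr₀, hr₁⟩, rfl⟩ := hz
  replace hr₁ : r < 1 := hr₁.lt_of_ne (by rintro rfl; simp at hzb)
  rw [flagFilter, eventually_bind]
  filter_upwards [Ioo_mem_nhdsGT (sub_pos.2 hr₁)] with t ⟨ht₀, ht₁⟩
  rw [eventually_map]
  have hpos : 0 < min (r + t) (1 - (r + t)) := lt_min (by linarith) (by linarith)
  filter_upwards [Ioo_mem_nhdsGT hpos] with δ ⟨hδ₀, hδ⟩
  obtain ⟨hδ₁, hδ₂⟩ := lt_min_iff.1 hδ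
  have hδ₃ : 0 < 1 - δ := by linarith
  -- `z + y` divides the segment from `a + c • (b - a)` to `m` in the ratio `δ : 1 - δ`.
  let c := (r + t - δ / 2) / (1 - δ)
  have hcs : a + c • (b - a) ∈ s := hs.add_smul_sub_mem ha hb
    ⟨div_nonneg (by linarith) hδ₃.le, (div_le_one hδ₃).2 (by linarith)⟩
  convert hs.combo_self_interior_mem_interior hcs hm hδ₃.le hδ₀ (sub_add_cancel 1 δ) using 1
  have hc' : r + t = (1 - δ) * c + δ / 2 := by
    simp only [c]
    field_simp
    ring
  rw [midpoint_eq_smul_add, invOf_eq_inv]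
  match_scalars <;> linarith

variable [Fact (finrank ℝ E = 2)] {f : StrongDual ℝ E} {d m p q z : E}

theorem eventually_flagFilter_or_of_notMem_segment (hs : Convex ℝ s) (hsym : ∀ y ∈ s, d - y ∈ s)
    (hm : m ∈ interior s) (hp : p ∈ s.extremePoints ℝ) (hq : q ∈ s.extremePoints ℝ) (hpq : p ≠ q)
    (hf : IsEdgeFunctional s p q f) (hz : z ∈ s) (hzpq : z ∉ segment ℝ p q) :
    (∀ᶠ y in flagFilter (q - p) (m - midpoint ℝ (d - p) (d - q)), z + y ∈ interior s) ∨
      ∀ᶠ y in flagFilter (p - q) (m - midpoint ℝ (d - p) (d - q)), z + y ∈ interior s := by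
  have hface : ∀ y ∈ s, f y = f p → y ∈ segment ℝ p q := fun y hy hfy =>
    mem_segment_of_mem_extremePoints hp hq hpq hf.ne_zero hf.map_eq hy hfy
  have hfz : f z < f p := (hf.le z hz).lt_of_ne fun h => hzpq (hface z hz h)
  rcases (hf.apply_le_apply_of_symmetric hsym hz).eq_or_lt with hfz' | hfz'
  · have hz' : z ∈ segment ℝ (d - p) (d - q) := by
      have h := hface (d - z) (hsym z hz) (by rw [map_sub, ← hfz', map_sub, sub_sub_cancel])
      simpa using sub_mem_segment d h
    by_cases hzq : z = d - q
    · left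
      rw [segment_symm] at hz'
      have hzp : z ≠ d - p := fun h => hpq (sub_right_injective (h.symm.trans hzq))
      simpa [midpoint_comm] using
        eventually_flagFilter_of_mem_segment hs (hsym q hq.1) (hsym p hp.1) hm hz' hzp
    · right
      simpa using eventually_flagFilter_of_mem_segment hs (hsym p hp.1) (hsym q hq.1) hm hz' hzq
  · obtain ⟨y, hy, hfy⟩ := exists_mem_interior_apply_eq hs ⟨m, hm⟩ (hsym p hp.1) hp.1 hfz' hfz
    obtain ⟨r, rfl⟩ :=
      exists_eq_add_smul_of_apply_eq hf.ne_zero (sub_ne_zero.2 hpq.symm) hf.apply_sub_eq_zero hfy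
    rcases lt_trichotomy r 0 with hr | rfl | hr
    · right
      refine eventually_flagFilter_of_add_smul_mem_interior hs (neg_pos.2 hr) hz ?_ _
      rwa [neg_smul, ← smul_neg, neg_sub]
    · left
      exact eventually_flagFilter_of_mem_interior (by simpa using hy) _ _
    · left
      exact eventually_flagFilter_of_add_smul_mem_interior hs hr hz hy _

end FlagFilter

section VertexDirections

variable {E : Type*} [AddCommGroup E] [Module ℝ E] [TopologicalSpace E] [IsTopologicalAddGroup E]
  [ContinuousSMul ℝ E] [Fact (finrank ℝ E = 2)]

theorem exists_tangent_direction_of_mem_exposedPoints {s : Set E} {d p : E} (hs : Convex ℝ s)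
    (hne : (interior s).Nonempty) (hsym : ∀ y ∈ s, d - y ∈ s) (hp : p ∈ s.exposedPoints ℝ) :
    ∃ w : E, (∀ t : ℝ, t ≠ 0 → p + t • w ∉ s) ∧
      ∀ (z : E) (t : ℝ), 0 < t → z + t • w ∈ s → z + (-t) • w ∈ s → z ∈ interior s := by
  obtain ⟨hps, f, hf⟩ := hp
  obtain ⟨w, hw, hfw⟩ := exists_ne_zero_apply_eq_zero f
  have hmap (z : E) (t : ℝ) : f (z + t • w) = f z := by simp [hfw]
  refine ⟨w, fun t ht hpt => ?_, fun z t ht h₁ h₂ => ?_⟩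
  · simpa [ht, hw] using (hf _ hpt).2 (hmap p t).ge
  have hlt : ∀ y : E, y + t • w ∈ s → y + (-t) • w ∈ s → f y < f p := by
    intro y hy₁ hy₂
    refine ((hmap y t).symm.le.trans (hf _ hy₁).1).lt_of_ne fun hy => ?_
    have e₁ := (hf _ hy₁).2 (by rw [hmap, hy])
    have e₂ := (hf _ hy₂).2 (by rw [hmap, hy])
    have ht' : t = -t := smul_left_injective ℝ hw (add_left_cancel (e₁.trans e₂.symm))
    linarith
  have hlt' : f (d - z) < f p :=
    hlt (d - z) (by convert hsym _ h₂ using 1; module) (by convert hsym _ h₁ using 1; module)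
  refine mem_interior_of_add_smul_mem hs hne (hsym p hps) hps ?_ (hlt z h₁ h₂) hw hfw
    (neg_lt_zero.2 ht) ht h₂ h₁
  rw [map_sub] at hlt' ⊢
  linarith

end VertexDirections

namespace IsKFoldTranslativeTiling

variable {ι : Type} {K : Set (ℝ × ℝ)} {x : ι → ℝ × ℝ} {k : ℕ}

theorem locallyFinite (h : IsKFoldTranslativeTiling K x k) (hK : Bornology.IsBounded K) :
    LocallyFinite fun i => {p | p - x i ∈ K} := by
  obtain ⟨C, hC⟩ := hK.exists_norm_le
  refine fun p => ⟨Metric.ball p 1, Metric.ball_mem_nhds p one_pos,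
    (h.1 (‖p‖ + 1 + C)).subset fun i ⟨q, hqi, hqp⟩ => ?_⟩
  calc ‖x i‖ = ‖p + (q - p) - (q - x i)‖ := by congr 1; abel
    _ ≤ ‖p‖ + ‖q - p‖ + ‖q - x i‖ := (norm_sub_le _ _).trans (by gcongr; exact norm_add_le _ _)
    _ ≤ ‖p‖ + 1 + C := by gcongr; exacts [(mem_ball_iff_norm.1 hqp).le, hC _ hqi]

theorem ncard_mem_interior_le (h : IsKFoldTranslativeTiling K x k) (p : ℝ × ℝ) :
    {i | p - x i ∈ interior K}.ncard ≤ k := by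
  by_cases hfin : {i | p - x i ∈ interior K}.Finite
  · rw [Set.ncard_eq_toFinset_card _ hfin]
    exact h.2.2 p _ fun i hi => hfin.mem_toFinset.1 hi
  · simp [Set.Infinite.ncard hfin]

theorem le_ncard_mem (h : IsKFoldTranslativeTiling K x k) (hK : Bornology.IsBounded K)
    (p : ℝ × ℝ) : k ≤ {i | p - x i ∈ K}.ncard := by
  obtain ⟨s, hks, hs⟩ := h.2.1 p
  rw [← Set.ncard_coe_finset] at hks
  exact hks.trans (Set.ncard_le_ncard hs ((h.locallyFinite hK).point_finite p))

theorem ncard_mem_add_ncard_mem_interior_le (h : IsKFoldTranslativeTiling K x k)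
    (hK : Bornology.IsBounded K) {p : ℝ × ℝ} {l₁ l₂ : Filter (ℝ × ℝ)} [l₁.NeBot] [l₂.NeBot]
    (hl₁ : l₁ ≤ 𝓝 0) (hl₂ : l₂ ≤ 𝓝 0)
    (hmem : ∀ i, p - x i ∈ K → (∀ᶠ y in l₁, p - x i + y ∈ interior K) ∨
      ∀ᶠ y in l₂, p - x i + y ∈ interior K) :
    {i | p - x i ∈ K}.ncard + {i | p - x i ∈ interior K}.ncard ≤ 2 * k := by
  have hfin : {i | p - x i ∈ K}.Finite := (h.locallyFinite hK).point_finite p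
  have hint {i : ι} (hi : p - x i ∈ interior K) : ∀ᶠ y in 𝓝 0, p - x i + y ∈ interior K :=
    (continuous_const.add continuous_id).tendsto' (0 : ℝ × ℝ) (p - x i) (add_zero _)
      |>.eventually (isOpen_interior.mem_nhds hi)
  have exists_displacement (l : Filter (ℝ × ℝ)) [l.NeBot] : ∃ y, ∀ i, p - x i ∈ K →
      (∀ᶠ y in l, p - x i + y ∈ interior K) → p - x i + y ∈ interior K := by
    have hev : ∀ᶠ y in l, ∀ i ∈ {i | p - x i ∈ K ∧ ∀ᶠ y in l, p - x i + y ∈ interior K},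
        p - x i + y ∈ interior K :=
      (eventually_all_finite (hfin.subset fun i hi => hi.1)).2 fun i hi => hi.2
    obtain ⟨y, hy⟩ := hev.exists
    exact ⟨y, fun i hi hi' => hy i ⟨hi, hi'⟩⟩
  obtain ⟨y₁, hy₁⟩ := exists_displacement l₁
  obtain ⟨y₂, hy₂⟩ := exists_displacement l₂
  let C (y : ℝ × ℝ) : Set ι := {i | p + y - x i ∈ interior K}
  have hCfin (y : ℝ × ℝ) : (C y).Finite :=
    ((h.locallyFinite hK).point_finite (p + y)).subset fun i hi => interior_subset (s := K) hi
  have hC {i : ι} {y : ℝ × ℝ} (hi : p - x i + y ∈ interior K) : i ∈ C y := by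
    rwa [Set.mem_ofPred_eq, add_sub_right_comm]
  calc _ ≤ (C y₁ ∪ C y₂).ncard + (C y₁ ∩ C y₂).ncard := by
        refine add_le_add (Set.ncard_le_ncard ?_ ((hCfin y₁).union (hCfin y₂)))
          (Set.ncard_le_ncard ?_ ((hCfin y₁).inter_of_left _))
        · exact fun i hi => (hmem i hi).imp (hC <| hy₁ i hi ·) (hC <| hy₂ i hi ·)
        · exact fun i hi => ⟨hC (hy₁ i (interior_subset hi) ((hint hi).filter_mono hl₁)),
            hC (hy₂ i (interior_subset hi) ((hint hi).filter_mono hl₂))⟩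
    _ = (C y₁).ncard + (C y₂).ncard := Set.ncard_union_add_ncard_inter _ _ (hCfin _) (hCfin _)
    _ ≤ 2 * k := by linarith [h.ncard_mem_interior_le (p + y₁), h.ncard_mem_interior_le (p + y₂)]

theorem two_mul_lt_ncard_mem_add_ncard_mem_interior (h : IsKFoldTranslativeTiling K x k)
    (hKc : IsClosed K) (hK : Bornology.IsBounded K) {p w : ℝ × ℝ} {j : ι} (hj : p - x j ∈ K)
    (hjw : ∀ t : ℝ, t ≠ 0 → p - x j + t • w ∉ K)
    (hw : ∀ (z : ℝ × ℝ) (t : ℝ), 0 < t → z + t • w ∈ K → z + (-t) • w ∈ K → z ∈ interior K) :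
    2 * k < {i | p - x i ∈ K}.ncard + {i | p - x i ∈ interior K}.ncard := by
  have hfin (q : ℝ × ℝ) : {i | q - x i ∈ K}.Finite := (h.locallyFinite hK).point_finite q
  have hj' : j ∈ {i | p - x i ∈ K} := hj
  let C (t : ℝ) : Set ι := {i | p + t • w - x i ∈ K}
  have hCmem (t : ℝ) (i : ι) : i ∈ C t ↔ p - x i + t • w ∈ K := by
    rw [Set.mem_ofPred_eq, add_sub_right_comm]
  have hsub : ∀ᶠ t in 𝓝 (0 : ℝ), C t ⊆ {i | p - x i ∈ K} :=
    (tendsto_add_smul_nhds_zero p w).eventually ((h.locallyFinite hK).eventually_subset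
      (fun i => hKc.preimage (continuous_id.sub continuous_const)) p)
  have hsub' : ∀ᶠ t in 𝓝 (0 : ℝ), C (-t) ⊆ {i | p - x i ∈ K} :=
    (continuous_neg.tendsto' (0 : ℝ) 0 neg_zero).eventually hsub
  obtain ⟨t, ⟨ht₁, ht₂⟩, ht : 0 < t⟩ :=
    (((hsub.and hsub').filter_mono nhdsWithin_le_nhds).and self_mem_nhdsWithin).exists
        (f := 𝓝[>] 0)
  have hjC : ∀ t : ℝ, t ≠ 0 → j ∉ C t := fun t ht hjt => hjw t ht ((hCmem t j).1 hjt)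
  calc 2 * k ≤ (C t).ncard + (C (-t)).ncard := by
        linarith [h.le_ncard_mem hK (p + t • w), h.le_ncard_mem hK (p + (-t) • w)]
    _ = (C t ∪ C (-t)).ncard + (C t ∩ C (-t)).ncard :=
        (Set.ncard_union_add_ncard_inter _ _ (hfin _) (hfin _)).symm
    _ ≤ ({i | p - x i ∈ K} \ {j}).ncard + {i | p - x i ∈ interior K}.ncard := by
        refine add_le_add (Set.ncard_le_ncard ?_ (hfin p).sdiff) (Set.ncard_le_ncard
          (fun i hi => hw _ t ht ((hCmem _ _).1 hi.1) ((hCmem _ _).1 hi.2))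
          ((hfin p).subset fun i hi => interior_subset (s := K) hi))
        exact Set.subset_sdiff_singleton (Set.union_subset ht₁ ht₂)
          (not_or.2 ⟨hjC t ht.ne', hjC (-t) (neg_ne_zero.2 ht.ne')⟩)
    _ < {i | p - x i ∈ K}.ncard + {i | p - x i ∈ interior K}.ncard :=
        Nat.add_lt_add_right (Set.ncard_sdiff_singleton_lt_of_mem hj' (hfin p)) _

theorem exists_sub_mem_segment (h : IsKFoldTranslativeTiling K x k) (hconv : Convex ℝ K)
    (hcomp : IsCompact K) (hne : (interior K).Nonempty) {d : ℝ × ℝ} (hsym : ∀ y ∈ K, d - y ∈ K)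
    {v : ℝ × ℝ} {j : ι} (hv : v - x j ∈ K.exposedPoints ℝ) {p q : ℝ × ℝ}
    (hp : p ∈ K.extremePoints ℝ) (hq : q ∈ K.extremePoints ℝ) (hpq : p ≠ q)
    (hfr : segment ℝ p q ⊆ frontier K) : ∃ i, v - x i ∈ segment ℝ p q := by
  by_contra! hv'
  obtain ⟨w, hjw, hw⟩ := exists_tangent_direction_of_mem_exposedPoints hconv hne hsym hv
  have hlt := h.two_mul_lt_ncard_mem_add_ncard_mem_interior hcomp.isClosed hcomp.isBounded
    hv.1 hjw hw
  obtain ⟨f, hf⟩ := exists_isEdgeFunctional hconv hne hp.1 hq.1 hfr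
  obtain ⟨m, hm⟩ := hne
  exact hlt.not_ge <| h.ncard_mem_add_ncard_mem_interior_le hcomp.isBounded
    (flagFilter_le_nhds_zero _ _) (flagFilter_le_nhds_zero _ _)
    fun i hi => eventually_flagFilter_or_of_notMem_segment hconv hsym hm hp hq hpq hf hi (hv' i)

end IsKFoldTranslativeTiling

theorem IsKFoldTranslativeTiling.exists_mem_frontier_and_mem_interior {P : Set (ℝ × ℝ)}
    {V : Finset (ℝ × ℝ)} {d : ℝ × ℝ} {ι : Type} {x : ι → ℝ × ℝ} {k : ℕ}
    (htile : IsKFoldTranslativeTiling P x k) (hP : IsConvexPolygon P V)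
    (hsym : ∀ y ∈ P, d - y ∈ P) {n : ℕ} (hn : 4 * n + 4 ≤ V.card) {v' vs : ℝ × ℝ} {j : ι}
    (hG : IsEdge P V (v' - x j) (vs - x j)) :
    ∃ y : Fin n → ι, Function.Injective (x ∘ y) ∧
      ∀ i, v' - x (y i) ∈ frontier P ∧ vs - x (y i) ∈ interior P := by
  obtain ⟨p, q, hpq, hdisj, hint⟩ := hP.exists_disjoint_edges_add_mem_interior hsym hG hn
  rw [sub_sub_sub_cancel_right] at hint
  choose y hy using fun i => htile.exists_sub_mem_segment hP.convex hP.isCompact hP.2.2 hsym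
    (hP.mem_exposedPoints hG.1) (hP.2.1 _ (hpq i).1) (hP.2.1 _ (hpq i).2.1) (hpq i).2.2.1
    (hpq i).2.2.2
  refine ⟨y, fun i l hil => by_contra fun hne => ?_, fun i => ⟨(hpq i).2.2.2 (hy i), ?_⟩⟩
  · have hil : x (y i) = x (y l) := hil
    exact Set.disjoint_left.1 (hdisj hne) (hy i) (hil ▸ hy l)
  · simpa using hint i _ (hy i)

theorem dodecagon_four_interior_translates_general (P : Set (ℝ × ℝ)) (V : Finset (ℝ × ℝ))
    (hP : IsConvexPolygon P V) (n : ℕ) (hV : 4 * n + 4 ≤ V.card) (hsym : IsCentrallySymmetric P)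
    (k : ℕ) (ι : Type) (x : ι → ℝ × ℝ) (htile : IsKFoldTranslativeTiling P x k)
    (v v' vs : ℝ × ℝ) (j : ι) (hG : IsEdge P V (v' - x j) (vs - x j))
    (hvG : v - x j ∈ openSegment ℝ (v' - x j) (vs - x j)) :
    ∃ y z : Fin n → ι, Function.Injective (x ∘ y) ∧ Function.Injective (x ∘ z) ∧
      (∀ i l, x (y i) ≠ x (z l)) ∧
      (∀ i, v' - x (y i) ∈ frontier P ∧ v - x (y i) ∈ interior P) ∧
      ∀ i, vs - x (z i) ∈ frontier P ∧ v - x (z i) ∈ interior P := by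
  obtain ⟨c, hc⟩ := hsym
  obtain ⟨y, hy, hyP⟩ := htile.exists_mem_frontier_and_mem_interior hP hc hV hG
  obtain ⟨z, hz, hzP⟩ := htile.exists_mem_frontier_and_mem_interior hP hc hV hG.symm
  have hv (i) : v - x i ∈ openSegment ℝ (v' - x i) (vs - x i) := by
    simpa using (mem_openSegment_translate ℝ (x j - x i)).2 hvG
  have hfr {s} (hs : s ∈ frontier P) : s ∈ P := hP.isCompact.isClosed.frontier_subset hs
  refine ⟨y, z, hy, hz, fun i l h => ?_, fun i => ⟨(hyP i).1, ?_⟩, fun i => ⟨(hzP i).1, ?_⟩⟩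
  · exact (hzP l).1.2 (h ▸ (hyP i).2)
  · exact hP.convex.openSegment_self_interior_subset_interior (hfr (hyP i).1) (hyP i).2 (hv _)
  · exact hP.convex.openSegment_interior_self_subset_interior (hzP i).2 (hfr (hzP i).1) (hv _)

/-- Let `P` be a centrally symmetric convex dodecagon and `P + X` a `k`-fold translative
tiling. If a vertex `v ∈ V + X` lies in the relative interior of an edge of the translate
`P + x j` with endpoints `v'` and `v∗`, then there are four pairwise distinct points of
`X` (given by indices `i₁, i₂, i₃, i₄`) such that `v' ∈ ∂(P) + x i` and `v ∈ int(P) + x i`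
for `i = i₁, i₂`, and `vs ∈ ∂(P) + x i` and `v ∈ int(P) + x i` for `i = i₃, i₄`; in
particular at least `4` translates of `int(P)` contain `v`. -/
theorem dodecagon_four_interior_translates (P : Set (ℝ × ℝ)) (V : Finset (ℝ × ℝ))
    (hP : IsConvexPolygon P V) (hV : V.card = 12) (hsym : IsCentrallySymmetric P)
    (k : ℕ) (hk : 0 < k) (ι : Type) (x : ι → ℝ × ℝ)
    (htile : IsKFoldTranslativeTiling P x k)
    (v : ℝ × ℝ) (jv : ι) (hv : v - x jv ∈ V)
    (v' vs : ℝ × ℝ) (j : ι) (hG : IsEdge P V (v' - x j) (vs - x j))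
    (hvG : v - x j ∈ openSegment ℝ (v' - x j) (vs - x j)) :
    ∃ i₁ i₂ i₃ i₄ : ι,
      x i₁ ≠ x i₂ ∧ x i₁ ≠ x i₃ ∧ x i₁ ≠ x i₄ ∧
      x i₂ ≠ x i₃ ∧ x i₂ ≠ x i₄ ∧ x i₃ ≠ x i₄ ∧
      (v' - x i₁ ∈ frontier P ∧ v - x i₁ ∈ interior P) ∧
      (v' - x i₂ ∈ frontier P ∧ v - x i₂ ∈ interior P) ∧
      (vs - x i₃ ∈ frontier P ∧ v - x i₃ ∈ interior P) ∧
      (vs - x i₄ ∈ frontier P ∧ v - x i₄ ∈ interior P) := by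
  obtain ⟨y, z, hy, hz, hyz, hyP, hzP⟩ := dodecagon_four_interior_translates_general P V hP 2
    hV.ge hsym k ι x htile v v' vs j hG hvG
  exact ⟨y 0, y 1, z 0, z 1, hy.ne zero_ne_one, hyz 0 0, hyz 0 1, hyz 1 0, hyz 1 1,
    hz.ne zero_ne_one, hyP 0, hyP 1, hzP 0, hzP 1⟩
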